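/- For all A, B, C ∈ 𝔪': g'(Λ'(A)B, C) + g'(B, Λ'(A)C) = 0; that is, each endomorphism Λ'(A) of 𝔪' is skew-symmetric with respect to g'. -/

import Mathlib

noncomputable section

/- Context: *extended symmetric data* consists of a finite-dimensional real
semisimple Lie algebra `𝔤` with a `ℤ₂`-grading `𝔤 = 𝔤₀ ⊕ 𝔤₁`, a decomposition
`𝔤₀ = 𝔥 ⊕ 𝔨` into commuting Lie subalgebras, and nonzero reals `λ₀, λ₁` such
that `g := λ₀ κ|𝔨 ⊥ λ₁ κ|𝔤₁` is positive definite on `𝔪 := 𝔨 ⊕ 𝔤₁` (`κ` the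
Killing form).  `proj_𝔪` is the projection `𝔤 = 𝔥 ⊕ 𝔪 → 𝔪` along `𝔥`, `U` is
the symmetric bilinear map determined by
`2g(U(X,Y),Z) = g(proj_𝔪[Z,X],Y) + g(X,proj_𝔪[Z,Y])`, and the Nomizu map is
`Λ(X)Y = ½ proj_𝔪[X,Y] + U(X,Y)`. -/

/-- Extended symmetric data on a real Lie algebra `L` (semisimplicity and finite
dimensionality are imposed as typeclass assumptions in the theorems). -/
structure ExtSymData (L : Type*) [LieRing L] [LieAlgebra ℝ L] where
  /-- the subalgebra `𝔥` -/
  H : Submodule ℝ L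
  /-- the subalgebra `𝔨` -/
  K : Submodule ℝ L
  /-- the odd part `𝔤₁` of the grading -/
  G1 : Submodule ℝ L
  lam0 : ℝ
  lam1 : ℝ
  lam0_ne : lam0 ≠ 0
  lam1_ne : lam1 ≠ 0
  /-- `𝔥 ⊕ 𝔨` is a direct sum -/
  hHK_inf : H ⊓ K = ⊥
  /-- `𝔤₀ ⊕ 𝔤₁` is a direct sum -/
  hG0_inf : (H ⊔ K) ⊓ G1 = ⊥
  /-- `𝔤 = 𝔥 ⊕ 𝔨 ⊕ 𝔤₁` -/
  h_top : H ⊔ K ⊔ G1 = ⊤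
  /-- `𝔥` is a Lie subalgebra -/
  hH_sub : ∀ a ∈ H, ∀ b ∈ H, ⁅a, b⁆ ∈ H
  /-- `𝔨` is a Lie subalgebra -/
  hK_sub : ∀ a ∈ K, ∀ b ∈ K, ⁅a, b⁆ ∈ K
  /-- `[𝔥, 𝔨] = 0` -/
  hHK_comm : ∀ a ∈ H, ∀ b ∈ K, ⁅a, b⁆ = (0 : L)
  /-- `[𝔤₀, 𝔤₁] ⊆ 𝔤₁` -/
  hG0G1 : ∀ a ∈ H ⊔ K, ∀ b ∈ G1, ⁅a, b⁆ ∈ G1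
  /-- `[𝔤₁, 𝔤₁] ⊆ 𝔤₀` -/
  hG1G1 : ∀ a ∈ G1, ∀ b ∈ G1, ⁅a, b⁆ ∈ H ⊔ K
  /-- the metric `g` -/
  gform : L →ₗ[ℝ] L →ₗ[ℝ] ℝ
  gform_K : ∀ x ∈ K, ∀ x' ∈ K, gform x x' = lam0 * killingForm ℝ L x x'
  gform_G1 : ∀ y ∈ G1, ∀ y' ∈ G1, gform y y' = lam1 * killingForm ℝ L y y'
  gform_KG1 : ∀ x ∈ K, ∀ y ∈ G1, gform x y = 0
  gform_G1K : ∀ x ∈ K, ∀ y ∈ G1, gform y x = 0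
  /-- `g` is positive definite on `𝔪 = 𝔨 ⊕ 𝔤₁` -/
  gform_posdef : ∀ v ∈ K ⊔ G1, v ≠ 0 → 0 < gform v v
  /-- the projection `proj_𝔪 : 𝔤 = 𝔥 ⊕ 𝔪 → 𝔪` along `𝔥` -/
  projm : L →ₗ[ℝ] L
  projm_H : ∀ h ∈ H, projm h = 0
  projm_m : ∀ m ∈ K ⊔ G1, projm m = m
  /-- the symmetric bilinear map `U` -/
  Ubil : L →ₗ[ℝ] L →ₗ[ℝ] L
  Ubil_symm : ∀ X Y : L, Ubil X Y = Ubil Y X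
  Ubil_mem : ∀ X ∈ K ⊔ G1, ∀ Y ∈ K ⊔ G1, Ubil X Y ∈ K ⊔ G1
  Ubil_def : ∀ X ∈ K ⊔ G1, ∀ Y ∈ K ⊔ G1, ∀ Z ∈ K ⊔ G1,
    2 * gform (Ubil X Y) Z = gform (projm ⁅Z, X⁆) Y + gform X (projm ⁅Z, Y⁆)

variable {L : Type*} [LieRing L] [LieAlgebra ℝ L]

/-- The Nomizu map `Λ(X)Y = ½ proj_𝔪 ⁅X,Y⁆ + U(X,Y)` of the Levi-Civita
connection. -/
def nomizu (D : ExtSymData L) (X Y : L) : L :=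
  (2⁻¹ : ℝ) • D.projm ⁅X, Y⁆ + D.Ubil X Y

open scoped TensorProduct

/-- The embedding `v ↦ 1 ⊗ v` of `𝔤` into `𝔤^ℂ = ℂ ⊗[ℝ] 𝔤`. -/
def iota1 {L : Type*} [LieRing L] [LieAlgebra ℝ L] : L →ₗ[ℝ] ℂ ⊗[ℝ] L :=
  TensorProduct.mk ℝ ℂ L 1

/-- The map `v ↦ i ⊗ v` of `𝔤` into `𝔤^ℂ = ℂ ⊗[ℝ] 𝔤`. -/
def iotaI {L : Type*} [LieRing L] [LieAlgebra ℝ L] : L →ₗ[ℝ] ℂ ⊗[ℝ] L :=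
  TensorProduct.mk ℝ ℂ L Complex.I

/-- The value `Λ'(x + iy)(x' + iy')` of the dual Nomizu map, written out in
components:
`Λ'(x+iy)(x'+iy') = 1 ⊗ (Λ(x)x' - Λ(y)y') + i ⊗ (2[x,y'] - Λ(x)y' - Λ(y)x')`,
which is exactly the piecewise definition
`Λ'(x)x' = Λ(x)x'`, `Λ'(x)(iy') = i(2[x,y'] - Λ(x)y')`,
`Λ'(iy)x' = -i Λ(y)x'`, `Λ'(iy)(iy') = -Λ(y)y'`. -/
def nomizuDual (D : ExtSymData L) (x y x' y' : L) : ℂ ⊗[ℝ] L :=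
  iota1 (nomizu D x x' - nomizu D y y')
    + iotaI ((2 : ℝ) • ⁅x, y'⁆ - nomizu D x y' - nomizu D y x')

namespace ExtSymData

/-!
With `𝔨` in degree `0` and `𝔤₁` in degree `1`, the reductive complement `𝔪 = 𝔨 ⊕ 𝔤₁` is
`ℤ/2`-graded with `g`-orthogonal pieces, and `proj_𝔪 [·, ·]` respects the grading. Since `U` is
defined from `g` and `proj_𝔪 [·, ·]` by duality, `U`, and hence `Λ`, respects it too, so `Λ'(A)`
preserves `𝔪'`. Expanding `g'(Λ'(A)B, C) + g'(B, Λ'(A)C)` into graded components leaves only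
instances of two identities: `Λ(X)` is `g`-skew on `𝔪`, and `ad x` is `g`-skew on `𝔤₁` for `x ∈ 𝔨`.
-/

variable (D : ExtSymData L)

/-- The `ℤ/2`-grading of `𝔪`: `𝔨` in degree `0` and `𝔤₁` in degree `1`. Indexing by `ZMod 2`
lets each statement about degrees replace its four cases in `𝔨` and `𝔤₁`. -/
def part : ZMod 2 → Submodule ℝ L :=
  ![D.K, D.G1]

theorem part_le (i : ZMod 2) : D.part i ≤ D.K ⊔ D.G1 := by
  fin_cases i
  exacts [le_sup_left, le_sup_right]

theorem exists_add_eq_of_mem_sup {v : L} (hv : v ∈ D.K ⊔ D.G1) (i : ZMod 2) :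
    ∃ a ∈ D.part i, ∃ b ∈ D.part (i + 1), a + b = v := by
  fin_cases i
  · exact Submodule.mem_sup.1 hv
  · exact Submodule.mem_sup.1 (sup_comm D.K D.G1 ▸ hv)

theorem gform_eq_zero_of_ne {i j : ZMod 2} (hij : i ≠ j) {a b : L} (ha : a ∈ D.part i)
    (hb : b ∈ D.part j) : D.gform a b = 0 := by
  fin_cases i <;> fin_cases j
  · exact absurd rfl hij
  · exact D.gform_KG1 a ha b hb
  · exact D.gform_G1K b hb a ha
  · exact absurd rfl hij

theorem mem_part_of_gform_eq_zero {i : ZMod 2} {v : L} (hv : v ∈ D.K ⊔ D.G1)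
    (h : ∀ z ∈ D.part (i + 1), D.gform v z = 0) : v ∈ D.part i := by
  obtain ⟨a, ha, b, hb, rfl⟩ := D.exists_add_eq_of_mem_sup hv i
  have hab : D.gform a b = 0 := D.gform_eq_zero_of_ne (left_ne_add.2 one_ne_zero) ha hb
  have hbb : D.gform b b = 0 := by simpa [hab] using h b hb
  have hb0 : b = 0 := by
    by_contra hne
    exact (D.gform_posdef b (D.part_le _ hb) hne).ne' hbb
  simpa [hb0] using ha

theorem gform_comm {a b : L} (ha : a ∈ D.K ⊔ D.G1) (hb : b ∈ D.K ⊔ D.G1) :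
    D.gform a b = D.gform b a := by
  obtain ⟨x, hx, y, hy, rfl⟩ := Submodule.mem_sup.1 ha
  obtain ⟨x', hx', y', hy', rfl⟩ := Submodule.mem_sup.1 hb
  have hK : D.gform x x' = D.gform x' x := by
    rw [D.gform_K x hx x' hx', D.gform_K x' hx' x hx, LieModule.traceForm_comm]
  have hG1 : D.gform y y' = D.gform y' y := by
    rw [D.gform_G1 y hy y' hy', D.gform_G1 y' hy' y hy, LieModule.traceForm_comm]
  simp only [map_add, LinearMap.add_apply, hK, hG1, D.gform_KG1 x hx y' hy',
    D.gform_KG1 x' hx' y hy, D.gform_G1K x hx y' hy', D.gform_G1K x' hx' y hy]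

theorem projm_mem (v : L) : D.projm v ∈ D.K ⊔ D.G1 := by
  have hv : v ∈ D.H ⊔ (D.K ⊔ D.G1) := by
    rw [← sup_assoc, D.h_top]
    exact Submodule.mem_top
  obtain ⟨h, hh, m, hm, rfl⟩ := Submodule.mem_sup.1 hv
  rwa [map_add, D.projm_H h hh, D.projm_m m hm, zero_add]

theorem projm_mem_K {v : L} (hv : v ∈ D.H ⊔ D.K) : D.projm v ∈ D.K := by
  obtain ⟨h, hh, k, hk, rfl⟩ := Submodule.mem_sup.1 hv
  rwa [map_add, D.projm_H h hh, D.projm_m k (Submodule.mem_sup_left hk), zero_add]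

theorem projm_lie_mem_G1 {x y : L} (hx : x ∈ D.H ⊔ D.K) (hy : y ∈ D.G1) :
    D.projm ⁅x, y⁆ ∈ D.G1 := by
  have hxy : ⁅x, y⁆ ∈ D.G1 := D.hG0G1 x hx y hy
  rwa [D.projm_m _ (Submodule.mem_sup_right hxy)]

theorem projm_lie_mem_part {i j : ZMod 2} {a b : L} (ha : a ∈ D.part i) (hb : b ∈ D.part j) :
    D.projm ⁅a, b⁆ ∈ D.part (i + j) := by
  fin_cases i <;> fin_cases j
  · exact D.projm_mem_K (Submodule.mem_sup_right (D.hK_sub a ha b hb))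
  · exact D.projm_lie_mem_G1 (Submodule.mem_sup_right ha) hb
  · rw [← lie_skew, map_neg]
    exact D.G1.neg_mem (D.projm_lie_mem_G1 (Submodule.mem_sup_right hb) ha)
  · exact D.projm_mem_K (D.hG1G1 a ha b hb)

theorem Ubil_mem_part {i j : ZMod 2} {a b : L} (ha : a ∈ D.part i) (hb : b ∈ D.part j) :
    D.Ubil a b ∈ D.part (i + j) := by
  have ha' := D.part_le i ha
  have hb' := D.part_le j hb
  refine D.mem_part_of_gform_eq_zero (D.Ubil_mem a ha' b hb') fun z hz ↦ ?_
  have hdeg : i + j + 1 + i ≠ j ∧ i ≠ i + j + 1 + j := by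
    clear * -
    decide +revert
  have hza : D.gform (D.projm ⁅z, a⁆) b = 0 :=
    D.gform_eq_zero_of_ne hdeg.1 (D.projm_lie_mem_part hz ha) hb
  have hzb : D.gform a (D.projm ⁅z, b⁆) = 0 :=
    D.gform_eq_zero_of_ne hdeg.2 ha (D.projm_lie_mem_part hz hb)
  have hU := D.Ubil_def a ha' b hb' z (D.part_le _ hz)
  linarith

theorem nomizu_mem_part {i j : ZMod 2} {a b : L} (ha : a ∈ D.part i) (hb : b ∈ D.part j) :
    nomizu D a b ∈ D.part (i + j) :=
  add_mem (Submodule.smul_mem _ _ (D.projm_lie_mem_part ha hb)) (D.Ubil_mem_part ha hb)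

theorem gform_nomizu_skew {a b c : L} (ha : a ∈ D.K ⊔ D.G1) (hb : b ∈ D.K ⊔ D.G1)
    (hc : c ∈ D.K ⊔ D.G1) :
    D.gform (nomizu D a b) c + D.gform b (nomizu D a c) = 0 := by
  have hU : 2 * (D.gform (D.Ubil a b) c + D.gform b (D.Ubil a c)) =
      -(D.gform (D.projm ⁅a, b⁆) c + D.gform b (D.projm ⁅a, c⁆)) := by
    rw [D.gform_comm hb (D.Ubil_mem a ha c hc), mul_add, D.Ubil_def a ha b hb c hc,
      D.Ubil_def a ha c hc b hb, D.gform_comm hb (D.projm_mem _), ← lie_skew c a, ← lie_skew c b,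
      ← lie_skew b a]
    simp only [map_neg, LinearMap.neg_apply]
    ring
  simp only [nomizu, map_add, map_smul, LinearMap.add_apply, LinearMap.smul_apply, smul_eq_mul]
  linarith

theorem gform_ad_skew {x y z : L} (hx : x ∈ D.H ⊔ D.K) (hy : y ∈ D.G1)
    (hz : z ∈ D.G1) : D.gform ⁅x, y⁆ z + D.gform y ⁅x, z⁆ = 0 := by
  rw [D.gform_G1 _ (D.hG0G1 x hx y hy) z hz, D.gform_G1 y hy _ (D.hG0G1 x hx z hz),
    LieModule.traceForm_apply_lie_apply']
  ring

variable {x y x' y' x'' y'' : L}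

/-- The component of `Λ'(x + iy)(x' + iy')` in `𝔨`, on which `g'` evaluates as `g`. -/
def nomizuDualRe (x y x' y' : L) : L :=
  nomizu D x x' - nomizu D y y'

theorem nomizuDualRe_mem (hx : x ∈ D.K) (hy : y ∈ D.G1) (hx' : x' ∈ D.K) (hy' : y' ∈ D.G1) :
    D.nomizuDualRe x y x' y' ∈ D.K := by
  have hxx : nomizu D x x' ∈ D.K := D.nomizu_mem_part (i := 0) (j := 0) hx hx'
  have hyy : nomizu D y y' ∈ D.K := D.nomizu_mem_part (i := 1) (j := 1) hy hy'
  exact sub_mem hxx hyy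

/-- The component of `Λ'(x + iy)(x' + iy')` in `i𝔤₁`, divided by `i` so that it lies in `𝔤₁`,
where `g'` evaluates as `g`. -/
def nomizuDualIm (x y x' y' : L) : L :=
  (2 : ℝ) • ⁅x, y'⁆ - nomizu D x y' - nomizu D y x'

theorem nomizuDualIm_mem (hx : x ∈ D.K) (hy : y ∈ D.G1) (hx' : x' ∈ D.K) (hy' : y' ∈ D.G1) :
    D.nomizuDualIm x y x' y' ∈ D.G1 := by
  have hlie : ⁅x, y'⁆ ∈ D.G1 := D.hG0G1 x (Submodule.mem_sup_right hx) y' hy'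
  have hxy : nomizu D x y' ∈ D.G1 := D.nomizu_mem_part (i := 0) (j := 1) hx hy'
  have hyx : nomizu D y x' ∈ D.G1 := D.nomizu_mem_part (i := 1) (j := 0) hy hx'
  exact sub_mem (sub_mem (D.G1.smul_mem 2 hlie) hxy) hyx

theorem nomizuDual_eq (x y x' y' : L) :
    nomizuDual D x y x' y' =
      iota1 (D.nomizuDualRe x y x' y') + iotaI (D.nomizuDualIm x y x' y') :=
  rfl

theorem gform_nomizuDual_skew (hx : x ∈ D.K) (hy : y ∈ D.G1) (hx' : x' ∈ D.K)
    (hy' : y' ∈ D.G1) (hx'' : x'' ∈ D.K) (hy'' : y'' ∈ D.G1) :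
    (D.gform (D.nomizuDualRe x y x' y') x'' + D.gform (D.nomizuDualIm x y x' y') y'')
      + (D.gform x' (D.nomizuDualRe x y x'' y'') + D.gform y' (D.nomizuDualIm x y x'' y''))
      = 0 := by
  have hK : D.K ≤ D.K ⊔ D.G1 := le_sup_left
  have hG1 : D.G1 ≤ D.K ⊔ D.G1 := le_sup_right
  have skew_x_KK := D.gform_nomizu_skew (hK hx) (hK hx') (hK hx'')
  have skew_x_GG := D.gform_nomizu_skew (hK hx) (hG1 hy') (hG1 hy'')
  have skew_y_GK := D.gform_nomizu_skew (hG1 hy) (hG1 hy') (hK hx'')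
  have skew_y_KG := D.gform_nomizu_skew (hG1 hy) (hK hx') (hG1 hy'')
  have skew_ad := D.gform_ad_skew (Submodule.mem_sup_right hx) hy' hy''
  simp only [nomizuDualRe, nomizuDualIm, map_sub, map_smul, LinearMap.sub_apply,
    LinearMap.smul_apply, smul_eq_mul]
  linarith

end ExtSymData

theorem statement_9_general [FiniteDimensional ℝ L]
    (D : ExtSymData L)
    (g' : (ℂ ⊗[ℝ] L) → (ℂ ⊗[ℝ] L) → ℝ)
    (hg' : ∀ x ∈ D.K, ∀ y ∈ D.G1, ∀ x' ∈ D.K, ∀ y' ∈ D.G1,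
      g' (iota1 x + iotaI y) (iota1 x' + iotaI y')
        = D.gform x x' + D.gform y y')
    (x : L) (hx : x ∈ D.K) (y : L) (hy : y ∈ D.G1)
    (x' : L) (hx' : x' ∈ D.K) (y' : L) (hy' : y' ∈ D.G1)
    (x'' : L) (hx'' : x'' ∈ D.K) (y'' : L) (hy'' : y'' ∈ D.G1) :
    g' (nomizuDual D x y x' y') (iota1 x'' + iotaI y'')
      + g' (iota1 x' + iotaI y') (nomizuDual D x y x'' y'') = 0 := by
  have hskew := D.gform_nomizuDual_skew hx hy hx' hy' hx'' hy''
  rw [D.nomizuDual_eq, D.nomizuDual_eq,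
    hg' _ (D.nomizuDualRe_mem hx hy hx' hy') _ (D.nomizuDualIm_mem hx hy hx' hy') _ hx'' _ hy'',
    hg' _ hx' _ hy' _ (D.nomizuDualRe_mem hx hy hx'' hy'') _ (D.nomizuDualIm_mem hx hy hx'' hy'')]
  exact hskew

/-- For all `A, B, C ∈ 𝔪' = 𝔨 ⊕ i𝔤₁` (written as
`A = 1⊗x + i⊗y` with `x ∈ 𝔨`, `y ∈ 𝔤₁`, etc.), and any function `g'` on
`𝔤^ℂ` satisfying `g'(x+iy, x'+iy') = g(x,x') + g(y,y')` on `𝔪'`: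
`g'(Λ'(A)B, C) + g'(B, Λ'(A)C) = 0`, i.e. each `Λ'(A)` is `g'`-skew-symmetric. -/
theorem statement_9 [FiniteDimensional ℝ L] [LieAlgebra.IsSemisimple ℝ L]
    (D : ExtSymData L)
    (g' : (ℂ ⊗[ℝ] L) → (ℂ ⊗[ℝ] L) → ℝ)
    (hg' : ∀ x ∈ D.K, ∀ y ∈ D.G1, ∀ x' ∈ D.K, ∀ y' ∈ D.G1,
      g' (iota1 x + iotaI y) (iota1 x' + iotaI y')
        = D.gform x x' + D.gform y y')
    (x : L) (hx : x ∈ D.K) (y : L) (hy : y ∈ D.G1)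
    (x' : L) (hx' : x' ∈ D.K) (y' : L) (hy' : y' ∈ D.G1)
    (x'' : L) (hx'' : x'' ∈ D.K) (y'' : L) (hy'' : y'' ∈ D.G1) :
    g' (nomizuDual D x y x' y') (iota1 x'' + iotaI y'')
      + g' (iota1 x' + iotaI y') (nomizuDual D x y x'' y'') = 0 := by
  exact statement_9_general D g' hg' x hx y hy x' hx' y' hy' x'' hx'' y'' hy''
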